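/- Let G be a cubic simple graph, let v be a vertex of G with (pairwise distinct) neighbors a, b, c, and let G' be the graph obtained from G by deleting v, adding three new pairwise adjacent vertices va, vb, vc (forming a triangle), and adding the edges va a, vb b and vc c. Then ν(G') = 2 · ν(G). -/

import Mathlib

namespace CiDC

open SimpleGraph

/-- A circuit in a graph: a connected 2-regular subgraph. -/
def IsCircuit {V : Type*} {G : SimpleGraph V} (H : G.Subgraph) : Prop :=
  H.Connected ∧ ∀ v ∈ H.verts, (H.neighborSet v).ncard = 2

open scoped Classical in
/-- A circuit double cover: a multiset of circuits covering every edge exactly twice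
(counted with multiplicity). -/
def IsCiDC {V : Type*} (G : SimpleGraph V) (C : Multiset G.Subgraph) : Prop :=
  (∀ H ∈ C, IsCircuit H) ∧ ∀ e ∈ G.edgeSet, C.countP (fun H => e ∈ H.edgeSet) = 2

/-- ν(G): the number of circuit double covers of `G`. -/
noncomputable def nu {V : Type*} (G : SimpleGraph V) : ℕ :=
  {C : Multiset G.Subgraph | IsCiDC G C}.ncard

/-- A cubic graph: every vertex has degree 3. -/
def IsCubic {V : Type*} (G : SimpleGraph V) : Prop :=
  ∀ v : V, (G.neighborSet v).ncard = 3


/-- Adjacency of the graph obtained by expanding the vertex `v` (with neighbors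
`a`, `b`, `c`) into a triangle on three new vertices. -/
def TriangleExpansionAdj {V : Type*} (G : SimpleGraph V) (v a b c : V) :
    ({x : V // x ≠ v} ⊕ Fin 3) → ({x : V // x ≠ v} ⊕ Fin 3) → Prop
  | Sum.inl u, Sum.inl w => G.Adj u.1 w.1
  | Sum.inr i, Sum.inr j => i ≠ j
  | Sum.inl u, Sum.inr i => (i = 0 ∧ u.1 = a) ∨ (i = 1 ∧ u.1 = b) ∨ (i = 2 ∧ u.1 = c)
  | Sum.inr i, Sum.inl u => (i = 0 ∧ u.1 = a) ∨ (i = 1 ∧ u.1 = b) ∨ (i = 2 ∧ u.1 = c)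

section aux
open scoped Classical

lemma two_of_three {α : Type*} {x y z : α} (hxy : x ≠ y) (hxz : x ≠ z) (hyz : y ≠ z)
    {S : Set α} (hS : ∀ w ∈ S, w = x ∨ w = y ∨ w = z) :
    S.ncard = 2 ↔ (x ∉ S ∧ y ∈ S ∧ z ∈ S) ∨ (x ∈ S ∧ y ∉ S ∧ z ∈ S) ∨
      (x ∈ S ∧ y ∈ S ∧ z ∉ S) := by
  have key : S = ({w | w = x ∧ x ∈ S} ∪ {w | w = y ∧ y ∈ S}) ∪ {w | w = z ∧ z ∈ S} := by
    ext w
    constructor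
    · intro hw
      rcases hS w hw with rfl | rfl | rfl <;> simp [hw]
    · rintro ((⟨rfl, h⟩ | ⟨rfl, h⟩) | ⟨rfl, h⟩) <;> exact h
  have c3 : ({x, y, z} : Set α).ncard = 3 := by
    rw [Set.ncard_eq_three]; exact ⟨x, y, z, hxy, hxz, hyz, rfl⟩
  by_cases h1 : x ∈ S <;> by_cases h2 : y ∈ S <;> by_cases h3 : z ∈ S <;>
    simp only [h1, h2, h3, and_true, and_false, Set.ofPred_false, Set.union_empty,
      Set.empty_union, Set.ofPred_eq_eq_singleton, Set.singleton_union] at key <;>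
    simp only [h1, h2, h3, not_true_eq_false, not_false_eq_true, and_true, and_false, or_false,
      false_or, or_true, true_or, and_self, iff_true, iff_false] <;> rw [key]
  · rw [show ({x, y} ∪ {z} : Set α) = {x, y, z} by ext; simp; tauto]
    omega
  all_goals simp [*]

lemma rtg_symm {W : Type*} {G : SimpleGraph W} {H : G.Subgraph} {p q : W}
    (h : Relation.ReflTransGen H.Adj p q) : Relation.ReflTransGen H.Adj q p := by
  induction h with
  | refl => exact .refl
  | tail _ h2 ih => exact Relation.ReflTransGen.head h2.symm ih

lemma conn_iff {W : Type*} {G : SimpleGraph W} (H : G.Subgraph) :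
    H.Connected ↔ H.verts.Nonempty ∧
      ∀ p ∈ H.verts, ∀ q ∈ H.verts, Relation.ReflTransGen H.Adj p q := by
  rw [Subgraph.connected_iff, and_comm]
  refine and_congr_right fun hne => ?_
  rw [Subgraph.preconnected_iff]
  constructor
  · intro h p hp q hq
    have := h ⟨p, hp⟩ ⟨q, hq⟩
    rw [SimpleGraph.reachable_iff_reflTransGen] at this
    exact Relation.ReflTransGen.lift (p := H.Adj) (fun x : H.verts => x.1) (fun a b h => h) _ _ this
  · rintro h ⟨p, hp⟩ ⟨q, hq⟩
    rw [SimpleGraph.reachable_iff_reflTransGen]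
    have := h p hp q hq
    induction this with
    | refl => exact .refl
    | tail _ h2 ih => exact (ih (H.edge_vert h2)).tail h2

lemma IsCircuit.nbr {W : Type*} {G : SimpleGraph W} {H : G.Subgraph} (h : IsCircuit H) {p : W}
    (hp : p ∈ H.verts) : ∃ q, H.Adj p q := by
  have h2 := h.2 p hp
  have : (H.neighborSet p).Nonempty := by
    rw [Set.nonempty_iff_ne_empty]; rintro h0; simp [h0] at h2
  exact this

lemma IsCircuit.ext {W : Type*} {G : SimpleGraph W} {H K : G.Subgraph} (h : IsCircuit H)
    (k : IsCircuit K) (e : ∀ p q, H.Adj p q ↔ K.Adj p q) : H = K := by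
  apply Subgraph.ext
  · ext p
    constructor
    · intro hp
      obtain ⟨q, hq⟩ := h.nbr hp
      exact K.edge_vert ((e _ _).1 hq)
    · intro hp
      obtain ⟨q, hq⟩ := k.nbr hp
      exact H.edge_vert ((e _ _).2 hq)
  · ext p q; exact e p q

lemma IsCircuit.rtg {W : Type*} {G : SimpleGraph W} {H : G.Subgraph} (h : IsCircuit H)
    {p q p' q' : W} (h1 : H.Adj p q) (h2 : H.Adj p' q') : Relation.ReflTransGen H.Adj p p' :=
  ((conn_iff H).1 h.1).2 _ (H.edge_vert h1) _ (H.edge_vert h2)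

lemma IsCircuit.edge {W : Type*} {G : SimpleGraph W} {H : G.Subgraph} (h : IsCircuit H) :
    ∃ p q, H.Adj p q := by
  obtain ⟨p, hp⟩ := ((conn_iff H).1 h.1).1
  exact ⟨p, h.nbr hp⟩

lemma mkCircuit {W : Type*} {G : SimpleGraph W} {H : G.Subgraph}
    (hv : ∀ p ∈ H.verts, ∃ q, H.Adj p q) (he : ∃ p q, H.Adj p q)
    (hd : ∀ p q, H.Adj p q → (H.neighborSet p).ncard = 2)
    (hc : ∀ p q p' q', H.Adj p q → H.Adj p' q' → Relation.ReflTransGen H.Adj p p') :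
    IsCircuit H := by
  refine ⟨(conn_iff H).2 ⟨?_, ?_⟩, ?_⟩
  · obtain ⟨p, q, h⟩ := he
    exact ⟨p, H.edge_vert h⟩
  · intro p hp q hq
    obtain ⟨_, h⟩ := hv p hp
    obtain ⟨_, h'⟩ := hv q hq
    exact hc _ _ _ _ h h'
  · intro p hp
    obtain ⟨_, h⟩ := hv p hp
    exact hd _ _ h

lemma cidc_iff {W : Type*} (G : SimpleGraph W) (C : Multiset G.Subgraph) :
    IsCiDC G C ↔ (∀ H ∈ C, IsCircuit H) ∧
      ∀ p q, G.Adj p q → C.countP (fun H => H.Adj p q) = 2 := by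
  refine and_congr_right fun _ => ?_
  constructor
  · intro h p q hpq
    rw [← h s(p, q) hpq]
    exact Multiset.countP_congr rfl (by simp)
  · intro h e
    induction e with
    | h p q =>
      intro hpq
      rw [← h p q hpq]
      exact Multiset.countP_congr rfl (by simp)

/-- The data of a triangle expansion, with the neighbors indexed by `Fin 3`. -/
structure Expn {V : Type*} (G : SimpleGraph V) (v : V) (n : Fin 3 → V)
    (G' : SimpleGraph ({x : V // x ≠ v} ⊕ Fin 3)) : Prop where
  inj : Function.Injective n
  nbr : ∀ x, G.Adj v x ↔ ∃ i, x = n i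
  ll : ∀ x y, G'.Adj (Sum.inl x) (Sum.inl y) ↔ G.Adj x.1 y.1
  lr : ∀ x i, G'.Adj (Sum.inl x) (Sum.inr i) ↔ x.1 = n i
  rr : ∀ i j, G'.Adj (Sum.inr i) (Sum.inr j) ↔ i ≠ j

variable {V : Type*} {G : SimpleGraph V} {v : V} {n : Fin 3 → V}
  {G' : SimpleGraph ({x : V // x ≠ v} ⊕ Fin 3)}

lemma Expn.ne (X : Expn G v n G') (i : Fin 3) : n i ≠ v := by
  intro h
  have := (X.nbr (n i)).2 ⟨i, rfl⟩
  rw [h] at this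
  exact G.irrefl this

lemma Expn.rl (X : Expn G v n G') (x i) : G'.Adj (Sum.inr i) (Sum.inl x) ↔ x.1 = n i := by
  rw [G'.adj_comm, X.lr]

/-- Projection of vertices. -/
def prj (v : V) : ({x : V // x ≠ v} ⊕ Fin 3) → V
  | Sum.inl x => x.1
  | Sum.inr _ => v

/-- Adjacency of expansions of circuits. -/
def EAdj (v : V) (n : Fin 3 → V) (s : Bool) (R : V → V → Prop) :
    ({x : V // x ≠ v} ⊕ Fin 3) → ({x : V // x ≠ v} ⊕ Fin 3) → Prop
  | Sum.inl x, Sum.inl y => R x.1 y.1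
  | Sum.inl x, Sum.inr i => x.1 = n i ∧ R v (n i)
  | Sum.inr i, Sum.inl x => x.1 = n i ∧ R v (n i)
  | Sum.inr i, Sum.inr j => i ≠ j ∧ (∃ x, R v x) ∧ (s = true ↔ R v (n i) ∧ R v (n j))

/-- Expansion of a subgraph; `s = true` is the short way, `s = false` the long way. -/
def expand (X : Expn G v n G') (s : Bool) (H : G.Subgraph) : G'.Subgraph where
  verts := {p | ∃ q, EAdj v n s H.Adj p q}
  Adj := EAdj v n s H.Adj
  adj_sub := by
    rintro (x | i) (y | j) h
    · exact (X.ll _ _).2 (H.adj_sub h)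
    · exact (X.lr _ _).2 h.1
    · exact (X.rl _ _).2 h.1
    · exact (X.rr _ _).2 h.1
  edge_vert := fun h => ⟨_, h⟩
  symm := by
    constructor
    rintro (x | i) (y | j) h
    · exact Subgraph.Adj.symm (G' := H) h
    · exact h
    · exact h
    · exact ⟨h.1.symm, h.2.1, by rw [h.2.2, and_comm]⟩

/-- Contraction of a subgraph. -/
def contr (X : Expn G v n G') (H : G'.Subgraph) : G.Subgraph where
  verts := {x | ∃ y, x ≠ y ∧ ∃ p q, prj v p = x ∧ prj v q = y ∧ H.Adj p q}
  Adj x y := x ≠ y ∧ ∃ p q, prj v p = x ∧ prj v q = y ∧ H.Adj p q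
  adj_sub := by
    rintro x y ⟨hne, p, q, rfl, rfl, h⟩
    have h' := H.adj_sub h
    rcases p with x | i <;> rcases q with y | j
    · exact (X.ll _ _).1 h'
    · exact ((X.nbr _).2 ⟨j, (X.lr _ _).1 h'⟩).symm
    · exact ((X.nbr _).2 ⟨i, (X.rl _ _).1 h'⟩)
    · exact absurd rfl hne
  edge_vert := fun h => ⟨_, h⟩
  symm := by
    constructor
    rintro x y ⟨hne, p, q, h1, h2, h⟩
    exact ⟨hne.symm, q, p, h2, h1, h.symm⟩

/-- The new triangle. -/
def tri (X : Expn G v n G') : G'.Subgraph where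
  verts := Set.range Sum.inr
  Adj p q := ∃ i j, i ≠ j ∧ p = Sum.inr i ∧ q = Sum.inr j
  adj_sub := by
    rintro _ _ ⟨i, j, h, rfl, rfl⟩
    exact (X.rr _ _).2 h
  edge_vert := by
    rintro _ _ ⟨i, j, h, rfl, rfl⟩
    exact ⟨i, rfl⟩
  symm := by
    constructor
    rintro _ _ ⟨i, j, h, rfl, rfl⟩
    exact ⟨j, i, h.symm, rfl, rfl⟩

lemma contr_ll (X : Expn G v n G') (H : G'.Subgraph) (x y : {x : V // x ≠ v}) :
    (contr X H).Adj x.1 y.1 ↔ H.Adj (Sum.inl x) (Sum.inl y) := by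
  constructor
  · rintro ⟨hne, x' | i, y' | j, h1, h2, h⟩
    · rwa [Subtype.ext h1, Subtype.ext h2] at h
    · exact absurd h2.symm y.2
    · exact absurd h1.symm x.2
    · exact absurd h1.symm x.2
  · intro h
    refine ⟨?_, _, _, rfl, rfl, h⟩
    intro he
    exact h.ne (by rw [Subtype.ext he])

lemma contr_vl (X : Expn G v n G') (H : G'.Subgraph) (i : Fin 3) :
    (contr X H).Adj v (n i) ↔ H.Adj (Sum.inr i) (Sum.inl ⟨n i, X.ne i⟩) := by
  constructor
  · rintro ⟨hne, x' | k, y' | j, h1, h2, h⟩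
    · exact absurd h1 x'.2
    · exact absurd h1 x'.2
    · have := (X.rl _ _).1 (H.adj_sub h)
      have h3 : n i = n k := by rw [← this, ← h2]; rfl
      have h4 := X.inj h3
      subst h4
      convert h
      exact h2.symm
    · exact absurd h2.symm (X.ne i)
  · intro h
    exact ⟨(X.ne i).symm, _, _, rfl, rfl, h⟩

/-- Vertex `v` in a circuit. -/
lemma circ_v (X : Expn G v n G') {H : G.Subgraph} (hH : IsCircuit H) {x : V} (hx : H.Adj v x) :
    (¬ H.Adj v (n 0) ∧ H.Adj v (n 1) ∧ H.Adj v (n 2)) ∨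
    (H.Adj v (n 0) ∧ ¬ H.Adj v (n 1) ∧ H.Adj v (n 2)) ∨
    (H.Adj v (n 0) ∧ H.Adj v (n 1) ∧ ¬ H.Adj v (n 2)) := by
  have h2 := hH.2 v (H.edge_vert hx)
  rw [two_of_three (x := n 0) (y := n 1) (z := n 2)] at h2
  · exact h2
  · exact fun h => absurd (X.inj h) (by decide)
  · exact fun h => absurd (X.inj h) (by decide)
  · exact fun h => absurd (X.inj h) (by decide)
  · intro w hw
    obtain ⟨i, rfl⟩ := (X.nbr w).1 (H.adj_sub hw)
    fin_cases i <;> simp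

lemma circ_v_none (X : Expn G v n G') {H : G.Subgraph} (hH : ¬ ∃ x, H.Adj v x) (i) :
    ¬ H.Adj v (n i) := fun h => hH ⟨_, h⟩

lemma circ_ex (X : Expn G v n G') {H : G.Subgraph} (hH : IsCircuit H) {x : V} (hx : H.Adj v x) :
    ∃ i j k, i ≠ j ∧ i ≠ k ∧ j ≠ k ∧ ¬ H.Adj v (n i) ∧ H.Adj v (n j) ∧ H.Adj v (n k) ∧
      ∀ l, l = i ∨ l = j ∨ l = k := by
  rcases circ_v X hH hx with ⟨h0, h1, h2⟩ | ⟨h0, h1, h2⟩ | ⟨h0, h1, h2⟩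
  · exact ⟨0, 1, 2, by decide, by decide, by decide, h0, h1, h2, by decide⟩
  · exact ⟨1, 0, 2, by decide, by decide, by decide, h1, h0, h2, by decide⟩
  · exact ⟨2, 0, 1, by decide, by decide, by decide, h2, h0, h1, by decide⟩

lemma expand_rr_conn (X : Expn G v n G') (s : Bool) {H : G.Subgraph} (hH : IsCircuit H)
    {i j : Fin 3} {p q} (hi : (expand X s H).Adj (Sum.inr i) p)
    (hj : (expand X s H).Adj (Sum.inr j) q) :
    Relation.ReflTransGen (expand X s H).Adj (Sum.inr i) (Sum.inr j) := by
  have hv : ∃ x, H.Adj v x := by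
    rcases p with x | k
    · exact ⟨_, hi.2⟩
    · exact hi.2.1
  obtain ⟨x, hx⟩ := hv
  obtain ⟨a, b, c, hab, hac, hbc, na, hb, hc, hl⟩ := circ_ex X hH hx
  have sy : ∀ {p q}, Relation.ReflTransGen (expand X s H).Adj p q →
      Relation.ReflTransGen (expand X s H).Adj q p := by
    intro p q h
    exact rtg_symm h
  cases s
  · have e1 : (expand X false H).Adj (Sum.inr a) (Sum.inr b) :=
      ⟨hab, ⟨x, hx⟩, by simp [na]⟩
    have e2 : (expand X false H).Adj (Sum.inr a) (Sum.inr c) :=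
      ⟨hac, ⟨x, hx⟩, by simp [na]⟩
    have : ∀ l, Relation.ReflTransGen (expand X false H).Adj (Sum.inr a) (Sum.inr l) := by
      intro l
      rcases hl l with rfl | rfl | rfl
      · exact .refl
      · exact .single e1
      · exact .single e2
    exact (sy (this i)).trans (this j)
  · have e1 : (expand X true H).Adj (Sum.inr b) (Sum.inr c) :=
      ⟨hbc, ⟨x, hx⟩, by simp [hb, hc]⟩
    have : ∀ l q, (expand X true H).Adj (Sum.inr l) q →
        Relation.ReflTransGen (expand X true H).Adj (Sum.inr b) (Sum.inr l) := by
      intro l q h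
      rcases hl l with rfl | rfl | rfl
      · exfalso
        rcases q with x | k
        · exact na h.2
        · exact na (h.2.2.1 rfl).1
      · exact .refl
      · exact .single e1
    exact (sy (this i _ hi)).trans (this j _ hj)

lemma ncard_two_rr {i j k : Fin 3} (hij : i ≠ j) (hik : i ≠ k) (hjk : j ≠ k)
    (hl : ∀ l, l = i ∨ l = j ∨ l = k) (X : Expn G v n G') (K : G'.Subgraph) :
    (K.neighborSet (Sum.inr i)).ncard = 2 ↔
      (¬ K.Adj (Sum.inr i) (Sum.inl ⟨n i, X.ne i⟩) ∧ K.Adj (Sum.inr i) (Sum.inr j) ∧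
        K.Adj (Sum.inr i) (Sum.inr k)) ∨
      (K.Adj (Sum.inr i) (Sum.inl ⟨n i, X.ne i⟩) ∧ ¬ K.Adj (Sum.inr i) (Sum.inr j) ∧
        K.Adj (Sum.inr i) (Sum.inr k)) ∨
      (K.Adj (Sum.inr i) (Sum.inl ⟨n i, X.ne i⟩) ∧ K.Adj (Sum.inr i) (Sum.inr j) ∧
        ¬ K.Adj (Sum.inr i) (Sum.inr k)) := by
  rw [two_of_three (x := Sum.inl ⟨n i, X.ne i⟩) (y := Sum.inr j) (z := Sum.inr k)]
  · simp only [Subgraph.mem_neighborSet]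
  · simp
  · simp
  · simpa using hjk
  · rintro (w | l) hw
    · left
      have := (X.rl _ _).1 (K.adj_sub hw)
      congr 1
      exact Subtype.ext this
    · right
      rcases hl l with rfl | rfl | rfl
      · exact absurd rfl hw.ne
      · simp
      · simp

lemma expand_circ (X : Expn G v n G') (s : Bool) {H : G.Subgraph} (hH : IsCircuit H) :
    IsCircuit (expand X s H) := by
  have hprj : ∀ p q, (expand X s H).Adj p q → ∃ y, H.Adj (prj v p) y := by
    rintro (x | i) (y | j) h
    · exact ⟨_, h⟩
    · refine ⟨v, ?_⟩
      have h2 := h.2.symm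
      rw [← h.1] at h2
      exact h2
    · exact ⟨_, h.2⟩
    · exact h.2.1
  apply mkCircuit
  · exact fun p h => h
  · obtain ⟨x, y, h⟩ := hH.edge
    by_cases hx : x = v
    · subst hx
      obtain ⟨i, rfl⟩ := (X.nbr _).1 (H.adj_sub h)
      exact ⟨Sum.inr i, Sum.inl ⟨n i, X.ne i⟩, rfl, h⟩
    · by_cases hy : y = v
      · subst hy
        obtain ⟨i, rfl⟩ := (X.nbr _).1 (H.adj_sub h.symm)
        exact ⟨Sum.inr i, Sum.inl ⟨n i, X.ne i⟩, rfl, h.symm⟩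
      · exact ⟨Sum.inl ⟨x, hx⟩, Sum.inl ⟨y, hy⟩, h⟩
  · rintro (x | i) q h
    · obtain ⟨y, hy⟩ := hprj _ _ h
      rw [← hH.2 _ (H.edge_vert hy)]
      rw [← Set.InjOn.ncard_image (f := prj v)]
      · congr 1
        ext z
        constructor
        · rintro ⟨y | i, hy, rfl⟩
          · exact hy
          · have h2 := hy.2.symm
            rw [← hy.1] at h2
            exact h2
        · intro hz
          by_cases hzv : z = v
          · subst hzv
            obtain ⟨i, hi⟩ := (X.nbr _).1 (H.adj_sub hz.symm)
            refine ⟨Sum.inr i, ⟨hi, ?_⟩, rfl⟩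
            rw [← hi]; exact hz.symm
          · exact ⟨Sum.inl ⟨z, hzv⟩, hz, rfl⟩
      · rintro (y | i) hy (z | j) hz hyz
        · congr 1; exact Subtype.ext hyz
        · exact absurd hyz y.2
        · exact absurd hyz.symm z.2
        · congr 1; exact X.inj (hy.1.symm.trans hz.1)
    · obtain ⟨y, hy⟩ := hprj _ _ h
      obtain ⟨a, b, c, hab, hac, hbc, na, hb, hc, hl⟩ := circ_ex X hH hy
      have hv : ∃ x, H.Adj v x := ⟨_, hy⟩
      rcases hl i with rfl | rfl | rfl
      · rw [ncard_two_rr hab hac hbc hl X]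
        cases s
        · simp [expand, EAdj, na, hb, hc, hab, hac, hbc, hv]
        · exfalso
          rcases q with x | k
          · exact na h.2
          · exact na (h.2.2.1 rfl).1
      · rw [ncard_two_rr hab.symm hbc hac (fun l => by have := hl l; tauto) X]
        cases s <;> simp [expand, EAdj, na, hb, hc, hab, hab.symm, hac, hbc, hv]
      · rw [ncard_two_rr hac.symm hbc.symm hab (fun l => by have := hl l; tauto) X]
        cases s <;> simp [expand, EAdj, na, hb, hc, hac.symm, hbc.symm, hv]
  · intro p q p' q' h h'
    set E := expand X s H with hE
    have sy : ∀ {p q}, Relation.ReflTransGen E.Adj p q → Relation.ReflTransGen E.Adj q p := by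
      intro p q h
      exact rtg_symm h
    obtain ⟨i0, hi0⟩ : ∃ i0, (∃ x, H.Adj v x) → H.Adj v (n i0) := by
      by_cases hv : ∃ x, H.Adj v x
      · obtain ⟨x, hx⟩ := hv
        obtain ⟨i, rfl⟩ := (X.nbr _).1 (H.adj_sub hx)
        exact ⟨i, fun _ => hx⟩
      · exact ⟨0, fun h => absurd h hv⟩
    have hE0 : (∃ x, H.Adj v x) → E.Adj (Sum.inr i0) (Sum.inl ⟨n i0, X.ne i0⟩) :=
      fun h => ⟨rfl, hi0 h⟩
    let g : V → {x : V // x ≠ v} ⊕ Fin 3 := fun x => if hx : x = v then Sum.inr i0 else Sum.inl ⟨x, hx⟩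
    have gv : g v = Sum.inr i0 := by simp [g]
    have gx : ∀ x (hx : x ≠ v), g x = Sum.inl ⟨x, hx⟩ := fun x hx => by simp [g, hx]
    have hvx : ∀ x, H.Adj v x → Relation.ReflTransGen E.Adj (g v) (g x) := by
      intro x hx
      obtain ⟨i, rfl⟩ := (X.nbr _).1 (H.adj_sub hx)
      have e1 : E.Adj (Sum.inr i) (Sum.inl ⟨n i, X.ne i⟩) := ⟨rfl, hx⟩
      rw [gv, gx _ (X.ne i)]
      exact (expand_rr_conn X s hH (hE0 ⟨_, hx⟩) e1).tail e1
    have step : ∀ x y, H.Adj x y → Relation.ReflTransGen E.Adj (g x) (g y) := by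
      intro x y hxy
      by_cases hx : x = v
      · subst hx; exact hvx _ hxy
      · by_cases hy : y = v
        · subst hy; exact sy (hvx _ hxy.symm)
        · rw [gx _ hx, gx _ hy]; exact .single hxy
    have base : ∀ p q, E.Adj p q → Relation.ReflTransGen E.Adj p (g (prj v p)) := by
      rintro (x | i) q h
      · rw [show prj v (Sum.inl x) = x.1 from rfl, gx _ x.2]
      · rw [show prj v (Sum.inr i) = v from rfl, gv]
        exact expand_rr_conn X s hH h (hE0 (hprj _ _ h))
    obtain ⟨y, hy⟩ := hprj _ _ h
    obtain ⟨y', hy'⟩ := hprj _ _ h'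
    exact (base _ _ h).trans ((Relation.ReflTransGen.lift' g step _ _ (hH.rtg hy hy')).trans
      (sy (base _ _ h')))

lemma tri_circ (X : Expn G v n G') : IsCircuit (tri X) := by
  have hr : ∀ i j, i ≠ j → (tri X).Adj (Sum.inr i) (Sum.inr j) :=
    fun i j h => ⟨i, j, h, rfl, rfl⟩
  have hl : ∀ i x, ¬ (tri X).Adj (Sum.inr i) (Sum.inl x) := by
    rintro i x ⟨_, _, _, _, h⟩
    cases h
  apply mkCircuit
  · rintro _ ⟨i, rfl⟩
    exact ⟨Sum.inr (i + 1), hr _ _ (by revert i; decide)⟩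
  · exact ⟨_, _, hr 0 1 (by decide)⟩
  · rintro _ _ ⟨i, j, hij, rfl, rfl⟩
    obtain ⟨k, h1, h2, h3⟩ : ∃ k : Fin 3, i ≠ k ∧ j ≠ k ∧ ∀ l, l = i ∨ l = j ∨ l = k := by
      revert i j; decide
    rw [ncard_two_rr hij h1 h2 h3 X]
    exact Or.inl ⟨hl _ _, hr _ _ hij, hr _ _ h1⟩
  · rintro _ _ _ _ ⟨i, j, hij, rfl, rfl⟩ ⟨i', j', hij', rfl, rfl⟩
    by_cases h : i = i'
    · subst h; exact .refl
    · exact .single (hr _ _ h)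

lemma contr_expand (X : Expn G v n G') (s : Bool) {H : G.Subgraph} (hH : IsCircuit H) :
    contr X (expand X s H) = H := by
  have hA : ∀ x y, (contr X (expand X s H)).Adj x y ↔ H.Adj x y := by
    have hv : ∀ y, (contr X (expand X s H)).Adj v y ↔ H.Adj v y := by
      intro y
      by_cases hy : G.Adj v y
      · obtain ⟨i, rfl⟩ := (X.nbr _).1 hy
        rw [contr_vl]
        simp [expand, EAdj]
      · exact ⟨fun h => absurd (Subgraph.adj_sub _ h) hy, fun h => absurd (H.adj_sub h) hy⟩
    intro x y
    by_cases hx : x = v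
    · subst hx; exact hv y
    · by_cases hy : y = v
      · subst hy
        rw [Subgraph.adj_comm, hv, H.adj_comm]
      · exact contr_ll X _ ⟨x, hx⟩ ⟨y, hy⟩
  apply Subgraph.ext
  · ext x
    constructor
    · rintro ⟨y, hy⟩
      exact H.edge_vert ((hA x y).1 hy)
    · intro hx
      obtain ⟨y, hy⟩ := hH.nbr hx
      exact ⟨y, (hA x y).2 hy⟩
  · ext x y; exact hA x y

lemma expand_ne_tri (X : Expn G v n G') (s : Bool) {H : G.Subgraph} (hH : IsCircuit H) :
    expand X s H ≠ tri X := by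
  intro h
  obtain ⟨x, y, hxy⟩ := hH.edge
  rw [← contr_expand X s hH, h] at hxy
  obtain ⟨hne, p, q, rfl, rfl, i, j, _, rfl, rfl⟩ := hxy
  exact hne rfl

/-- Local structure of a circuit of the expanded graph at the triangle. -/
lemma loc (X : Expn G v n G') {K : G'.Subgraph} (hK : IsCircuit K) {i j k : Fin 3}
    (hij : i ≠ j) (hik : i ≠ k) (hjk : j ≠ k) (hl : ∀ l, l = i ∨ l = j ∨ l = k) :
    K.Adj (Sum.inr i) (Sum.inl ⟨n i, X.ne i⟩) ↔
      ¬ (K.Adj (Sum.inr i) (Sum.inr j) ↔ K.Adj (Sum.inr i) (Sum.inr k)) := by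
  by_cases h : ∃ q, K.Adj (Sum.inr i) q
  · obtain ⟨q, hq⟩ := h
    have := hK.2 _ (K.edge_vert hq)
    rw [ncard_two_rr hij hik hjk hl X] at this
    tauto
  · have : ∀ q, ¬ K.Adj (Sum.inr i) q := fun q hq => h ⟨q, hq⟩
    simp [this]

lemma loc3 (X : Expn G v n G') {K : G'.Subgraph} (hK : IsCircuit K) :
    ((contr X K).Adj v (n 0) ↔
      ¬ (K.Adj (Sum.inr 0) (Sum.inr 2) ↔ K.Adj (Sum.inr 0) (Sum.inr 1))) ∧
    ((contr X K).Adj v (n 1) ↔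
      ¬ (K.Adj (Sum.inr 1) (Sum.inr 2) ↔ K.Adj (Sum.inr 0) (Sum.inr 1))) ∧
    ((contr X K).Adj v (n 2) ↔
      ¬ (K.Adj (Sum.inr 1) (Sum.inr 2) ↔ K.Adj (Sum.inr 0) (Sum.inr 2))) := by
  refine ⟨?_, ?_, ?_⟩
  · rw [contr_vl]
    exact loc X hK (by decide) (by decide) (by decide) (by decide)
  · rw [contr_vl, loc X hK (i := 1) (j := 2) (k := 0) (by decide) (by decide) (by decide)
      (by decide), K.adj_comm (Sum.inr 1) (Sum.inr 0)]
  · rw [contr_vl, loc X hK (i := 2) (j := 1) (k := 0) (by decide) (by decide) (by decide)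
      (by decide), K.adj_comm (Sum.inr 2) (Sum.inr 0), K.adj_comm (Sum.inr 2) (Sum.inr 1)]

lemma eq_tri (X : Expn G v n G') {K : G'.Subgraph} (hK : IsCircuit K)
    (h0 : K.Adj (Sum.inr 1) (Sum.inr 2)) (h1 : K.Adj (Sum.inr 0) (Sum.inr 2))
    (h2 : K.Adj (Sum.inr 0) (Sum.inr 1)) : K = tri X := by
  obtain ⟨e0, e1, e2⟩ := loc3 X hK
  have he : ∀ i, ¬ (contr X K).Adj v (n i) := by
    intro i; fin_cases i <;> simp [*]
  have hout : ∀ i q, K.Adj (Sum.inr i) q → ∃ j, q = Sum.inr j := by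
    rintro i (x | j) h
    · exfalso
      have hx := (X.rl _ _).1 (K.adj_sub h)
      apply he i
      rw [contr_vl]
      convert h
      exact hx.symm
    · exact ⟨j, rfl⟩
  have hr : ∀ i j, i ≠ j → K.Adj (Sum.inr i) (Sum.inr j) := by
    intro i j hij
    fin_cases i <;> fin_cases j <;> first | exact absurd rfl hij | assumption | (apply Subgraph.Adj.symm; assumption)
  refine hK.ext (tri_circ X) ?_
  intro p q
  constructor
  · intro h
    have hp : ∃ i, p = Sum.inr i := by
      have := hK.rtg h0 h
      clear h
      induction this with
      | refl => exact ⟨_, rfl⟩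
      | tail _ h2 ih =>
        obtain ⟨i, rfl⟩ := ih
        exact hout _ _ h2
    obtain ⟨i, rfl⟩ := hp
    obtain ⟨j, rfl⟩ := hout _ _ h
    exact ⟨i, j, fun hij => h.ne (by rw [hij]), rfl, rfl⟩
  · rintro ⟨i, j, hij, rfl, rfl⟩
    exact hr i j hij

lemma contr_v_iff (X : Expn G v n G') (K : G'.Subgraph) :
    (∃ x, (contr X K).Adj v x) ↔ (contr X K).Adj v (n 0) ∨ (contr X K).Adj v (n 1) ∨
      (contr X K).Adj v (n 2) := by
  constructor
  · rintro ⟨x, hx⟩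
    obtain ⟨i, rfl⟩ := (X.nbr _).1 ((contr X K).adj_sub hx)
    fin_cases i <;> simp_all
  · rintro (h | h | h) <;> exact ⟨_, h⟩

lemma contr_lr (X : Expn G v n G') (K : G'.Subgraph) (x : {x : V // x ≠ v}) (i : Fin 3) :
    K.Adj (Sum.inr i) (Sum.inl x) ↔ x.1 = n i ∧ (contr X K).Adj v (n i) := by
  rw [contr_vl]
  constructor
  · intro h
    have hx := (X.rl _ _).1 (K.adj_sub h)
    refine ⟨hx, ?_⟩
    convert h
    exact hx.symm
  · rintro ⟨hx, h⟩
    convert h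

lemma prop_help (s : Bool) (t0 t1 t2 e0 e1 e2 : Prop) (h0 : e0 ↔ ¬ (t1 ↔ t2))
    (h1 : e1 ↔ ¬ (t0 ↔ t2)) (h2 : e2 ↔ ¬ (t0 ↔ t1)) (hnt : ¬ (t0 ∧ t1 ∧ t2))
    (hs : s = true → ¬ (t0 ∧ t1) ∧ ¬ (t0 ∧ t2) ∧ ¬ (t1 ∧ t2))
    (hs' : s = false → (t0 → t1 ∨ t2) ∧ (t1 → t0 ∨ t2) ∧ (t2 → t0 ∨ t1)) :
    (((e0 ∨ e1 ∨ e2) ∧ (s = true ↔ e1 ∧ e2)) ↔ t0) ∧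
    (((e0 ∨ e1 ∨ e2) ∧ (s = true ↔ e0 ∧ e2)) ↔ t1) ∧
    (((e0 ∨ e1 ∨ e2) ∧ (s = true ↔ e0 ∧ e1)) ↔ t2) := by
  rw [h0, h1, h2]
  by_cases a0 : t0 <;> by_cases a1 : t1 <;> by_cases a2 : t2 <;> cases s <;>
    simp [a0, a1, a2] at hs hs' hnt ⊢

lemma expand_contr (X : Expn G v n G') {K : G'.Subgraph} (hK : IsCircuit K) (hT : K ≠ tri X)
    (s : Bool)
    (hs : s = true → ¬ (K.Adj (Sum.inr 1) (Sum.inr 2) ∧ K.Adj (Sum.inr 0) (Sum.inr 2)) ∧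
      ¬ (K.Adj (Sum.inr 1) (Sum.inr 2) ∧ K.Adj (Sum.inr 0) (Sum.inr 1)) ∧
      ¬ (K.Adj (Sum.inr 0) (Sum.inr 2) ∧ K.Adj (Sum.inr 0) (Sum.inr 1)))
    (hs' : s = false →
      (K.Adj (Sum.inr 1) (Sum.inr 2) → K.Adj (Sum.inr 0) (Sum.inr 2) ∨
        K.Adj (Sum.inr 0) (Sum.inr 1)) ∧
      (K.Adj (Sum.inr 0) (Sum.inr 2) → K.Adj (Sum.inr 1) (Sum.inr 2) ∨
        K.Adj (Sum.inr 0) (Sum.inr 1)) ∧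
      (K.Adj (Sum.inr 0) (Sum.inr 1) → K.Adj (Sum.inr 1) (Sum.inr 2) ∨
        K.Adj (Sum.inr 0) (Sum.inr 2))) :
    expand X s (contr X K) = K := by
  have hnt : ¬ (K.Adj (Sum.inr 1) (Sum.inr 2) ∧ K.Adj (Sum.inr 0) (Sum.inr 2) ∧
      K.Adj (Sum.inr 0) (Sum.inr 1)) := fun h => hT (eq_tri X hK h.1 h.2.1 h.2.2)
  have hA : ∀ p q, (expand X s (contr X K)).Adj p q ↔ K.Adj p q := by
    rintro (x | i) (y | j)
    · exact contr_ll X K x y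
    · rw [K.adj_comm]; exact (contr_lr X K x j).symm
    · exact (contr_lr X K y i).symm
    · obtain ⟨e0, e1, e2⟩ := loc3 X hK
      have hh : (expand X s (contr X K)).Adj (Sum.inr i) (Sum.inr j) ↔
        i ≠ j ∧ (∃ x, (contr X K).Adj v x) ∧
          (s = true ↔ (contr X K).Adj v (n i) ∧ (contr X K).Adj v (n j)) := Iff.rfl
      rw [hh, contr_v_iff]
      obtain ⟨f0, f1, f2⟩ := prop_help s _ _ _ _ _ _ e0 e1 e2 hnt hs hs'
      by_cases hij : i = j
      · subst hij
        exact ⟨fun h => absurd rfl h.1, fun h => absurd rfl h.ne⟩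
      · fin_cases i <;> fin_cases j
        · exact absurd rfl hij
        · simpa using f2
        · simpa using f1
        · rw [K.adj_comm, and_comm (a := (contr X K).Adj v _)]
          simpa using f2
        · exact absurd rfl hij
        · simpa using f0
        · rw [K.adj_comm, and_comm (a := (contr X K).Adj v _)]
          simpa using f1
        · rw [K.adj_comm, and_comm (a := (contr X K).Adj v _)]
          simpa using f0
        · exact absurd rfl hij
  apply Subgraph.ext
  · ext p
    constructor
    · rintro ⟨q, hq⟩
      exact K.edge_vert ((hA p q).1 hq)
    · intro hp
      obtain ⟨q, hq⟩ := hK.nbr hp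
      exact ⟨q, (hA p q).2 hq⟩
  · ext p q; exact hA p q

lemma contr_circ (X : Expn G v n G') {K : G'.Subgraph} (hK : IsCircuit K) (hT : K ≠ tri X) :
    IsCircuit (contr X K) := by
  obtain ⟨e0, e1, e2⟩ := loc3 X hK
  apply mkCircuit
  · exact fun p h => h
  · by_contra hno
    have hno' : ∀ x y, ¬ (contr X K).Adj x y := fun x y h => hno ⟨x, y, h⟩
    simp only [hno', false_iff, not_not] at e0 e1 e2
    obtain ⟨p, q, h⟩ := hK.edge
    rcases p with x | i <;> rcases q with y | j
    · exact hno' _ _ ((contr_ll X K _ _).2 h)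
    · exact hno' _ _ ((contr_lr X K _ _).1 h.symm).2
    · exact hno' _ _ ((contr_lr X K _ _).1 h).2
    · have : K.Adj (Sum.inr 0) (Sum.inr 1) := by
        have h' := h.symm
        fin_cases i <;> fin_cases j <;> first | exact absurd rfl h.ne | (simp at h h'; tauto)
      exact hT (eq_tri X hK (by tauto) (by tauto) this)
  · rintro x y h
    by_cases hx : x = v
    · subst hx
      rw [two_of_three (x := n 0) (y := n 1) (z := n 2)]
      · have := (contr_v_iff X K).1 ⟨_, h⟩
        simp only [Subgraph.mem_neighborSet]
        tauto
      · exact fun h => absurd (X.inj h) (by decide)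
      · exact fun h => absurd (X.inj h) (by decide)
      · exact fun h => absurd (X.inj h) (by decide)
      · intro w hw
        obtain ⟨i, rfl⟩ := (X.nbr w).1 ((contr X K).adj_sub hw)
        fin_cases i <;> simp
    · have him : (contr X K).neighborSet x = prj v '' K.neighborSet (Sum.inl ⟨x, hx⟩) := by
        ext z
        constructor
        · rintro ⟨hne, p, q, hp, rfl, hpq⟩
          rcases p with x' | i
          · refine ⟨q, ?_, rfl⟩
            subst hp
            exact hpq
          · exact absurd hp.symm hx
        · rintro ⟨q, hq, rfl⟩
          refine ⟨?_, _, _, rfl, rfl, hq⟩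
          rcases q with y | i
          · intro h
            exact hq.ne (congrArg Sum.inl (Subtype.ext h))
          · exact hx
      rw [him, Set.InjOn.ncard_image]
      · have : (prj v '' K.neighborSet (Sum.inl ⟨x, hx⟩)).Nonempty := by
          rw [← him]; exact ⟨y, h⟩
        obtain ⟨_, q, hq, _⟩ := this
        exact hK.2 _ (K.edge_vert hq)
      · rintro (y | i) hy (z | j) hz hyz
        · congr 1; exact Subtype.ext hyz
        · exact absurd hyz y.2
        · exact absurd hyz.symm z.2
        · congr 1
          apply X.inj
          rw [← (X.lr _ _).1 (K.adj_sub hy), ← (X.lr _ _).1 (K.adj_sub hz)]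
  · rintro _ _ _ _ ⟨_, p, q, rfl, rfl, h⟩ ⟨_, p', q', rfl, rfl, h'⟩
    refine Relation.ReflTransGen.lift' (prj v) ?_ _ _ (hK.rtg h h')
    intro a b hab
    by_cases hne : prj v a = prj v b
    · show Relation.ReflTransGen _ (prj v a) (prj v b)
      rw [hne]
    · exact .single ⟨hne, _, _, rfl, rfl, hab⟩

lemma cnt (M : Multiset (Bool × Bool × Bool)) (p : Bool × Bool × Bool → Prop) [DecidablePred p] :
    M.countP p = ∑ t, if p t then M.count t else 0 := by
  induction M using Multiset.induction with
  | empty => simp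
  | cons a M ih =>
    rw [Multiset.countP_cons, ih]
    have : ∀ t, (if p t then (a ::ₘ M).count t else 0) =
        (if p t then M.count t else 0) + (if t = a then (if p t then 1 else 0) else 0) := by
      intro t
      rw [Multiset.count_cons]
      split_ifs <;> simp
    simp_rw [this, Finset.sum_add_distrib]
    simp

lemma countP_single {β : Type*} (p : β → Prop) (a : β) :
    ({a} : Multiset β).countP p = if p a then 1 else 0 := by
  rw [← Multiset.cons_zero, Multiset.countP_cons]
  simp

lemma countP_type {β : Type*} (C : Multiset β) (τ : β → Bool × Bool × Bool)
    (p : β → Prop) (q : Bool × Bool × Bool → Bool) (h : ∀ x ∈ C, p x ↔ q (τ x) = true) :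
    C.countP p = (C.map τ).countP (fun t => q t = true) := by
  rw [Multiset.countP_map, ← Multiset.countP_eq_card_filter]
  exact Multiset.countP_congr rfl (fun x hx => by simpa using h x hx)

/-- Type of a circuit of `G`. -/
noncomputable def typ (v : V) (n : Fin 3 → V) (H : G.Subgraph) : Bool × Bool × Bool :=
  (decide (H.Adj v (n 0)), decide (H.Adj v (n 1)), decide (H.Adj v (n 2)))

/-- Type of a circuit of the expanded graph. -/
noncomputable def typ' (K : G'.Subgraph) : Bool × Bool × Bool :=
  (decide (K.Adj (Sum.inr 1) (Sum.inr 2)), decide (K.Adj (Sum.inr 0) (Sum.inr 2)),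
    decide (K.Adj (Sum.inr 0) (Sum.inr 1)))

lemma typ_counts (X : Expn G v n G') {C : Multiset G.Subgraph} (hC : IsCiDC G C) :
    (C.map (typ v n)).count (true, true, true) = 0 ∧
    (C.map (typ v n)).count (true, true, false) = 1 ∧
    (C.map (typ v n)).count (true, false, true) = 1 ∧
    (C.map (typ v n)).count (false, true, true) = 1 ∧
    (C.map (typ v n)).count (true, false, false) = 0 ∧
    (C.map (typ v n)).count (false, true, false) = 0 ∧
    (C.map (typ v n)).count (false, false, true) = 0 := by
  rw [cidc_iff] at hC
  obtain ⟨hc, hn⟩ := hC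
  have h0 := hn v (n 0) ((X.nbr _).2 ⟨_, rfl⟩)
  have h1 := hn v (n 1) ((X.nbr _).2 ⟨_, rfl⟩)
  have h2 := hn v (n 2) ((X.nbr _).2 ⟨_, rfl⟩)
  rw [countP_type C (typ v n) _ (fun t => t.1) (by simp [typ]), cnt] at h0
  rw [countP_type C (typ v n) _ (fun t => t.2.1) (by simp [typ]), cnt] at h1
  rw [countP_type C (typ v n) _ (fun t => t.2.2) (by simp [typ]), cnt] at h2
  have hz : ∀ t : Bool × Bool × Bool, (t = (true, true, true) ∨ t = (true, false, false) ∨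
      t = (false, true, false) ∨ t = (false, false, true)) → (C.map (typ v n)).count t = 0 := by
    intro t ht
    rw [Multiset.count_eq_zero, Multiset.mem_map]
    rintro ⟨H, hH, rfl⟩
    by_cases hv : ∃ x, H.Adj v x
    · obtain ⟨x, hx⟩ := hv
      have := circ_v X (hc H hH) hx
      simp only [typ, Prod.mk.injEq, decide_eq_true_eq, decide_eq_false_iff_not] at ht
      tauto
    · have : ∀ x, ¬ H.Adj v x := fun x hx => hv ⟨x, hx⟩
      simp [typ, this] at ht
  have z1 := hz (true, true, true) (by simp)
  have z2 := hz (true, false, false) (by simp)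
  have z3 := hz (false, true, false) (by simp)
  have z4 := hz (false, false, true) (by simp)
  simp [Fintype.sum_prod_type] at h0 h1 h2
  omega

lemma typ'_counts (X : Expn G v n G') {C : Multiset G'.Subgraph} (hC : IsCiDC G' C) :
    ((C.map typ').count (true, true, true) = 1 ∧
    (C.map typ').count (true, true, false) = 0 ∧
    (C.map typ').count (true, false, true) = 0 ∧
    (C.map typ').count (false, true, true) = 0) ∨
    ((C.map typ').count (true, true, true) = 0 ∧
    (C.map typ').count (true, false, false) = 0 ∧
    (C.map typ').count (false, true, false) = 0 ∧
    (C.map typ').count (false, false, true) = 0) := by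
  rw [cidc_iff] at hC
  obtain ⟨hc, hn⟩ := hC
  have h0 := hn (Sum.inr 1) (Sum.inr 2) ((X.rr _ _).2 (by decide))
  have h1 := hn (Sum.inr 0) (Sum.inr 2) ((X.rr _ _).2 (by decide))
  have h2 := hn (Sum.inr 0) (Sum.inr 1) ((X.rr _ _).2 (by decide))
  have h3 := hn (Sum.inr 0) (Sum.inl ⟨n 0, X.ne 0⟩) ((X.rl _ _).2 rfl)
  have h4 := hn (Sum.inr 1) (Sum.inl ⟨n 1, X.ne 1⟩) ((X.rl _ _).2 rfl)
  have h5 := hn (Sum.inr 2) (Sum.inl ⟨n 2, X.ne 2⟩) ((X.rl _ _).2 rfl)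
  rw [countP_type C typ' _ (fun t => t.1) (by simp [typ']), cnt] at h0
  rw [countP_type C typ' _ (fun t => t.2.1) (by simp [typ']), cnt] at h1
  rw [countP_type C typ' _ (fun t => t.2.2) (by simp [typ']), cnt] at h2
  have hl : ∀ K ∈ C, _ := fun K hK => loc3 X (hc K hK)
  simp only [contr_vl] at hl
  rw [countP_type C typ' _ (fun t => t.2.1 ^^ t.2.2)
    (fun K hK => by rw [(hl K hK).1]; simp [typ']), cnt] at h3
  rw [countP_type C typ' _ (fun t => t.1 ^^ t.2.2)
    (fun K hK => by rw [(hl K hK).2.1]; simp [typ']), cnt] at h4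
  rw [countP_type C typ' _ (fun t => t.1 ^^ t.2.1)
    (fun K hK => by rw [(hl K hK).2.2]; simp [typ']), cnt] at h5
  simp [Fintype.sum_prod_type] at h0 h1 h2 h3 h4 h5
  omega

/-- Expansion of a double cover. -/
noncomputable def expC (X : Expn G v n G') (s : Bool) (C : Multiset G.Subgraph) :
    Multiset G'.Subgraph :=
  (if s then {tri X} else 0) + C.map (expand X s)

/-- Contraction of a double cover. -/
noncomputable def conC (X : Expn G v n G') (C : Multiset G'.Subgraph) : Multiset G.Subgraph :=
  (C.filter (fun K => K ≠ tri X)).map (contr X)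

lemma expC_cidc (X : Expn G v n G') (s : Bool) {C : Multiset G.Subgraph} (hC : IsCiDC G C) :
    IsCiDC G' (expC X s C) := by
  have ht := typ_counts X hC
  rw [cidc_iff] at hC ⊢
  obtain ⟨hc, hn⟩ := hC
  constructor
  · intro K hK
    rw [expC, Multiset.mem_add] at hK
    rcases hK with hK | hK
    · cases s
      · simp at hK
      · simp at hK; rw [hK]; exact tri_circ X
    · rw [Multiset.mem_map] at hK
      obtain ⟨H, hH, rfl⟩ := hK
      exact expand_circ X s (hc H hH)
  · have hout : ∀ p q, prj v p ≠ prj v q → G.Adj (prj v p) (prj v q) →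
        (∀ H : G.Subgraph, (expand X s H).Adj p q ↔ H.Adj (prj v p) (prj v q)) →
        (expC X s C).countP (fun H => H.Adj p q) = 2 := by
      intro p q hne hadj hiff
      have htri : ¬ (tri X).Adj p q := by
        rintro ⟨i, j, _, rfl, rfl⟩; exact hne rfl
      rw [expC, Multiset.countP_add, Multiset.countP_map, ← Multiset.countP_eq_card_filter]
      simp only [hiff]
      rw [hn _ _ hadj]
      cases s
      · simp
      · simp [countP_single, htri]
    rintro (x | i) (y | j) hadj
    · have h' := (X.ll _ _).1 hadj
      exact hout _ _ h'.ne h' (fun H => Iff.rfl)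
    · have h' := (X.lr _ _).1 hadj
      have h2 := (X.nbr _).2 ⟨_, h'⟩
      refine hout _ _ h2.ne.symm h2.symm (fun H => ?_)
      simp only [expand, EAdj, prj]
      rw [H.adj_comm, ← h']; simp
    · have h' := (X.rl _ _).1 hadj
      have h2 := (X.nbr _).2 ⟨_, h'⟩
      refine hout _ _ h2.ne h2 (fun H => ?_)
      simp only [expand, EAdj, prj]
      rw [← h']; simp
    · have hij := (X.rr _ _).1 hadj
      have htri : (tri X).Adj (Sum.inr i) (Sum.inr j) := ⟨i, j, hij, rfl, rfl⟩
      let sel : Fin 3 → Bool × Bool × Bool → Bool := fun i t => ![t.1, t.2.1, t.2.2] i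
      have hsel : ∀ i (H : G.Subgraph), H.Adj v (n i) ↔ sel i (typ v n H) = true := by
        intro i H
        fin_cases i <;> simp [sel, typ]
      have hex : ∀ (H : G.Subgraph), (∃ x, H.Adj v x) ↔
          (sel 0 (typ v n H) || sel 1 (typ v n H) || sel 2 (typ v n H)) = true := by
        intro H
        simp only [Bool.or_eq_true, ← hsel]
        constructor
        · rintro ⟨x, hx⟩
          obtain ⟨i, rfl⟩ := (X.nbr _).1 (H.adj_sub hx)
          fin_cases i <;> simp_all
        · rintro ((h | h) | h) <;> exact ⟨_, h⟩
      rw [expC, Multiset.countP_add, Multiset.countP_map, ← Multiset.countP_eq_card_filter]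
      rw [countP_type C (typ v n) _ (fun t => (sel 0 t || sel 1 t || sel 2 t) &&
        (s == (sel i t && sel j t))), cnt]
      · fin_cases i <;> fin_cases j <;>
          first
          | exact absurd rfl hij
          | (cases s <;> simp [sel, Fintype.sum_prod_type, ht, countP_single] <;> exact htri)
      · intro H _
        have : (expand X s H).Adj (Sum.inr i) (Sum.inr j) ↔
          i ≠ j ∧ (∃ x, H.Adj v x) ∧ (s = true ↔ H.Adj v (n i) ∧ H.Adj v (n j)) := Iff.rfl
        rw [this, hex, hsel, hsel, Bool.and_eq_true, beq_iff_eq,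
          Bool.eq_iff_iff (a := s) (b := sel i _ && sel j _), Bool.and_eq_true (sel i _)]
        simp only [ne_eq, hij, not_false_eq_true, true_and]

lemma conC_expC (X : Expn G v n G') (s : Bool) {C : Multiset G.Subgraph}
    (hC : ∀ H ∈ C, IsCircuit H) : conC X (expC X s C) = C := by
  have h1 : (C.map (expand X s)).filter (fun K => K ≠ tri X) = C.map (expand X s) := by
    rw [Multiset.filter_eq_self]
    intro K hK
    rw [Multiset.mem_map] at hK
    obtain ⟨H, hH, rfl⟩ := hK
    exact expand_ne_tri X s (hC H hH)
  have h2 : (if s then {tri X} else 0 : Multiset G'.Subgraph).filter (fun K => K ≠ tri X) = 0 := by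
    cases s <;> simp
  rw [conC, expC, Multiset.filter_add, h1, h2, zero_add, Multiset.map_map]
  conv_rhs => rw [← Multiset.map_id C]
  exact Multiset.map_congr rfl (fun H hH => contr_expand X s (hC H hH))

lemma tri_mem (X : Expn G v n G') (s : Bool) {C : Multiset G.Subgraph}
    (hC : ∀ H ∈ C, IsCircuit H) : tri X ∈ expC X s C ↔ s = true := by
  have : tri X ∉ C.map (expand X s) := by
    rw [Multiset.mem_map]
    rintro ⟨H, hH, h⟩
    exact expand_ne_tri X s (hC H hH) h
  rw [expC, Multiset.mem_add]
  cases s <;> simp [this]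

lemma conC_cidc (X : Expn G v n G') {C : Multiset G'.Subgraph} (hC : IsCiDC G' C) :
    IsCiDC G (conC X C) := by
  rw [cidc_iff] at hC ⊢
  obtain ⟨hc, hn⟩ := hC
  constructor
  · intro H hH
    rw [conC, Multiset.mem_map] at hH
    obtain ⟨K, hK, rfl⟩ := hH
    rw [Multiset.mem_filter] at hK
    exact contr_circ X (hc K hK.1) hK.2
  · have main : ∀ x y p q, G'.Adj p q → (prj v p ≠ prj v q) →
        (∀ K : G'.Subgraph, (contr X K).Adj x y ↔ K.Adj p q) →
        (conC X C).countP (fun H => H.Adj x y) = 2 := by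
      intro x y p q hadj hne hiff
      rw [conC, Multiset.countP_map, ← Multiset.countP_eq_card_filter, Multiset.countP_filter,
        ← hn p q hadj]
      refine Multiset.countP_congr rfl (fun K hK => ?_)
      rw [hiff, eq_iff_iff, and_iff_left_iff_imp]
      rintro h rfl
      obtain ⟨i, j, _, rfl, rfl⟩ := h
      exact hne rfl
    intro x y hxy
    by_cases hx : x = v
    · subst hx
      obtain ⟨i, rfl⟩ := (X.nbr _).1 hxy
      exact main _ _ _ _ ((X.rl ⟨n i, X.ne i⟩ i).2 rfl) hxy.ne (fun K => contr_vl X K i)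
    · by_cases hy : y = v
      · subst hy
        obtain ⟨i, rfl⟩ := (X.nbr _).1 hxy.symm
        refine main _ _ _ _ ((X.rl ⟨n i, X.ne i⟩ i).2 rfl) hxy.ne.symm (fun K => ?_)
        rw [Subgraph.adj_comm]
        exact contr_vl X K i
      · exact main _ _ _ _ ((X.ll ⟨x, hx⟩ ⟨y, hy⟩).2 hxy) hxy.ne
          (fun K => contr_ll X K ⟨x, hx⟩ ⟨y, hy⟩)

lemma typ'_tri (X : Expn G v n G') {K : G'.Subgraph} (hK : IsCircuit K) :
    typ' K = (true, true, true) ↔ K = tri X := by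
  constructor
  · intro h
    simp only [typ', Prod.mk.injEq, decide_eq_true_eq] at h
    exact eq_tri X hK h.1 h.2.1 h.2.2
  · rintro rfl
    have hr : ∀ i j, i ≠ j → (tri X).Adj (Sum.inr i) (Sum.inr j) :=
      fun i j h => ⟨i, j, h, rfl, rfl⟩
    simp [typ', hr]

lemma expC_conC (X : Expn G v n G') {C : Multiset G'.Subgraph} (hC : IsCiDC G' C) :
    ∃ s, expC X s (conC X C) = C := by
  have ht := typ'_counts X hC
  have hc := hC.1
  have key : ∀ s, (∀ K ∈ C, K ≠ tri X → expand X s (contr X K) = K) →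
      (conC X C).map (expand X s) = C.filter (fun K => K ≠ tri X) := by
    intro s h
    rw [conC, Multiset.map_map]
    conv_rhs => rw [← Multiset.map_id (C.filter (fun K => K ≠ tri X))]
    refine Multiset.map_congr rfl (fun K hK => ?_)
    rw [Multiset.mem_filter] at hK
    exact h K hK.1 hK.2
  have hcount : (C.map typ').count (true, true, true) = C.count (tri X) := by
    rw [Multiset.count, Multiset.countP_map, ← Multiset.countP_eq_card_filter, Multiset.count]
    refine Multiset.countP_congr rfl (fun K hK => ?_)
    rw [eq_comm (b := typ' K), typ'_tri X (hc K hK), eq_comm (a := K)]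
  have hsplit : C.filter (fun K => K = tri X) + C.filter (fun K => K ≠ tri X) = C :=
    Multiset.filter_add_not _ _
  have hrep : C.filter (fun K => K = tri X) = Multiset.replicate (C.count (tri X)) (tri X) := by
    convert Multiset.filter_eq' C (tri X)
  rw [hrep, ← hcount] at hsplit
  have hz : ∀ t, (C.map typ').count t = 0 → ∀ K ∈ C, typ' K ≠ t := by
    intro t h K hK hKt
    rw [Multiset.count_eq_zero] at h
    exact h (hKt ▸ Multiset.mem_map_of_mem _ hK)
  rcases ht with ⟨h0, h1, h2, h3⟩ | ⟨h0, h1, h2, h3⟩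
  · refine ⟨true, ?_⟩
    rw [expC, key true]
    · rw [h0] at hsplit
      simpa using hsplit
    · intro K hK hT
      have a0 := fun h => hT ((typ'_tri X (hc K hK)).1 h)
      have a1 := hz _ h1 K hK
      have a2 := hz _ h2 K hK
      have a3 := hz _ h3 K hK
      simp only [typ', Prod.mk.injEq, decide_eq_true_eq, decide_eq_false_iff_not, ne_eq]
        at a0 a1 a2 a3
      refine expand_contr X (hc K hK) hT true (fun _ => ?_) (by simp)
      tauto
  · refine ⟨false, ?_⟩
    rw [expC, key false]
    · rw [h0] at hsplit
      simpa using hsplit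
    · intro K hK hT
      have a1 := hz _ h1 K hK
      have a2 := hz _ h2 K hK
      have a3 := hz _ h3 K hK
      simp only [typ', Prod.mk.injEq, decide_eq_true_eq, decide_eq_false_iff_not, ne_eq]
        at a1 a2 a3
      refine expand_contr X (hc K hK) hT false (by simp) (fun _ => ?_)
      tauto

lemma nu_expn (X : Expn G v n G') : nu G' = 2 * nu G := by
  let F : Bool × {C : Multiset G.Subgraph | IsCiDC G C} →
      {C : Multiset G'.Subgraph | IsCiDC G' C} :=
    fun x => ⟨expC X x.1 x.2.1, expC_cidc X x.1 x.2.2⟩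
  have hF : Function.Bijective F := by
    constructor
    · rintro ⟨s, C, hC⟩ ⟨s', C', hC'⟩ h
      have h' : expC X s C = expC X s' C' := congrArg Subtype.val h
      have e1 : C = C' := by
        rw [← conC_expC X s hC.1, h', conC_expC X s' hC'.1]
      have e2 : s = s' := by
        rw [Bool.eq_iff_iff, ← tri_mem X s hC.1, h', tri_mem X s' hC'.1]
      subst e1 e2
      rfl
    · rintro ⟨C, hC⟩
      obtain ⟨s, hs⟩ := expC_conC X hC
      exact ⟨⟨s, conC X C, conC_cidc X hC⟩, Subtype.ext hs⟩
  rw [nu, nu, ← Nat.card_coe_set_eq, ← Nat.card_coe_set_eq,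
    ← Nat.card_congr (Equiv.ofBijective F hF), Nat.card_prod]
  simp

end aux

/-- Replacing a vertex of a cubic graph by a triangle doubles the number of circuit
double covers. -/
theorem stmt9 {V : Type*} [Fintype V] (G : SimpleGraph V) (hcubic : IsCubic G)
    (v a b c : V) (hab : a ≠ b) (hac : a ≠ c) (hbc : b ≠ c)
    (hnbr : G.neighborSet v = {a, b, c})
    (G' : SimpleGraph ({x : V // x ≠ v} ⊕ Fin 3))
    (hG' : ∀ p q, G'.Adj p q ↔ TriangleExpansionAdj G v a b c p q) :
    nu G' = 2 * nu G := by
  refine nu_expn (v := v) (n := ![a, b, c]) (G := G) ⟨?_, ?_, ?_, ?_, ?_⟩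
  · intro i j h
    fin_cases i <;> fin_cases j <;> simp_all
  · intro x
    rw [← SimpleGraph.mem_neighborSet, hnbr]
    simp [Fin.exists_fin_succ]
  · intro x y
    rw [hG']; rfl
  · intro x i
    rw [hG']
    fin_cases i <;> simp [TriangleExpansionAdj]
  · intro i j
    rw [hG']; rfl

end CiDC
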